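/- For m = 4 marked vertices on any graph G, the identity Φ_{(1,1,1,1)} Φ_{(1,2,3,4)} = A_5(B_1+B_3+B_5+B_7) + A_1(B_3+B_7) + A_3(B_3+B_5) holds, where A_1 = Φ_{(1,1,2,3)}, A_3 = Φ_{(1,2,2,3)}, A_5 = Φ_{(1,2,3,2)}, B_1 = Φ_{(1,1,1,2)}, B_3 = Φ_{(1,2,1,1)}, B_5 = Φ_{(1,1,2,2)}, B_7 = Φ_{(1,2,2,1)}. -/

import Mathlib

open Finset

/-- A finite edge set `F` is a spanning forest of `G` compatible with the set partition of
(a subset of) the marked vertices `v : Fin m → V` encoded by `p : Fin m → Option ℕ`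
(`p i = none` means vertex `i` is unconstrained, `p i = some ℓ` means vertex `i` lies in
the part labelled `ℓ`): the edges of `F` lie in `G`, `F` is acyclic, two constrained
marked vertices lie in the same tree iff they have the same label, and every vertex of
the graph lies in the tree of some constrained marked vertex (so the trees of the forest
are in bijection with the parts of the partition). -/
def IsCompatibleForest {V : Type*} [Fintype V] [DecidableEq V] (G : SimpleGraph V) {m : ℕ}
    (v : Fin m → V) (p : Fin m → Option ℕ) (F : Finset (Sym2 V)) : Prop :=
  (F : Set (Sym2 V)) ⊆ G.edgeSet ∧
  (SimpleGraph.fromEdgeSet (F : Set (Sym2 V))).IsAcyclic ∧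
  (∀ i j : Fin m, p i ≠ none → p j ≠ none →
    ((SimpleGraph.fromEdgeSet (F : Set (Sym2 V))).Reachable (v i) (v j) ↔ p i = p j)) ∧
  (∀ w : V, ∃ i : Fin m, p i ≠ none ∧
    (SimpleGraph.fromEdgeSet (F : Set (Sym2 V))).Reachable w (v i))

/-- The spanning forest polynomial `Φ_P = Σ_{F ∼ P} Π_{e ∉ F} x_e` of the graph `G` with
edge variables `x`, marked vertices `v`, and partition `P` encoded by `p`. -/
noncomputable def forestPoly {V : Type*} [Fintype V] [DecidableEq V] {R : Type*}
    [CommRing R] (G : SimpleGraph V) [DecidableRel G.Adj] (x : Sym2 V → R) {m : ℕ}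
    (v : Fin m → V) (p : Fin m → Option ℕ) : R :=
  ∑ F ∈ G.edgeFinset.powerset,
    (letI := Classical.dec (IsCompatibleForest G v p F)
     if IsCompatibleForest G v p F then ∏ e ∈ G.edgeFinset \ F, x e else 0)

/-!
Divide `Φ_P` by the product of all edge variables: it becomes the sum of `∏_{e ∈ F} x_e⁻¹` over
forests, so that `x_e⁻¹` plays the role of a conductance. For a set of roots `S ∋ r`, the sum over
the forests rooted at `S` in which `w` hangs from `r` is harmonic in `w` off `S`, being the
potential at `w` when `r` is a source and `S \ {r}` is grounded, and the current entering another
root `s` is the forest sum for the roots `S \ {s}` in which `s` hangs from `r`. Symmetry of the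
Laplacian for the potentials of two root sets is a quadratic identity between forest sums. Taking
all marked vertices for one root set and a pair of them for the other gives the column expansion;
the pair `v₂, v₄` gives the theorem. Inverting the edge variables is harmless because the identity
is an identity of integer polynomials.
-/

open SimpleGraph in
theorem reachable_sup_edge_iff {V : Type*} {K : SimpleGraph V} {u a b c : V} :
    (K ⊔ edge u a).Reachable b c ↔
      K.Reachable b c ∨ K.Reachable b u ∧ K.Reachable a c ∨ K.Reachable b a ∧ K.Reachable u c := by
  have hua : (K ⊔ edge u a).Reachable u a := by
    by_cases h : u = a
    · exact h ▸ .rfl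
    · exact Adj.reachable (by simp [edge_adj, h])
  have hK {b c : V} (h : K.Reachable b c) : (K ⊔ edge u a).Reachable b c := h.mono le_sup_left
  constructor
  · rintro ⟨p⟩
    induction p with
    | nil => exact .inl .rfl
    | cons h p ih =>
      rcases h with h | h
      · have := h.reachable
        exact ih.imp this.trans (.imp (.imp_left this.trans) (.imp_left this.trans))
      · obtain ⟨⟨rfl, rfl⟩ | ⟨rfl, rfl⟩, -⟩ := (edge_adj ..).1 h
        · rcases ih with h | ⟨-, h⟩ | ⟨-, h⟩
          exacts [.inr (.inl ⟨.rfl, h⟩), .inr (.inl ⟨.rfl, h⟩), .inl h]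
        · rcases ih with h | ⟨-, h⟩ | ⟨-, h⟩
          exacts [.inr (.inr ⟨.rfl, h⟩), .inl h, .inr (.inr ⟨.rfl, h⟩)]
  · rintro (h | ⟨hb, hc⟩ | ⟨hb, hc⟩)
    exacts [hK h, (hK hb).trans (hua.trans (hK hc)), (hK hb).trans (hua.symm.trans (hK hc))]

theorem fromEdgeSet_insert {V : Type*} (u a : V) (F : Set (Sym2 V)) :
    SimpleGraph.fromEdgeSet (insert s(u, a) F) = .fromEdgeSet F ⊔ SimpleGraph.edge u a := by
  rw [Set.insert_eq, SimpleGraph.edge, SimpleGraph.fromEdgeSet_union, sup_comm]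

theorem notMem_of_not_reachable_fromEdgeSet {V : Type*} {F : Set (Sym2 V)} {u a : V}
    (h : ¬ (SimpleGraph.fromEdgeSet F).Reachable a u) : s(u, a) ∉ F := by
  intro hF
  have hne : a ≠ u := fun e => h (e ▸ .rfl)
  exact h (SimpleGraph.Adj.reachable (by simpa [hne, Sym2.eq_swap] using hF))

/-- `H` is a forest each of whose trees contains exactly one vertex of `S`, its root. -/
structure IsRootedForest {V : Type*} (H : SimpleGraph V) (S : Set V) : Prop where
  isAcyclic : H.IsAcyclic
  eq_of_reachable : ∀ ⦃s⦄, s ∈ S → ∀ ⦃t⦄, t ∈ S → H.Reachable s t → s = t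
  exists_reachable : ∀ w, ∃ s ∈ S, H.Reachable w s

namespace IsRootedForest

open SimpleGraph

variable {V : Type*} {H K K' : SimpleGraph V} {S : Set V} {u a a' r w : V}

theorem not_reachable_of_notMem (hK : IsRootedForest K (insert u S)) (hr : r ∈ S) (hu : u ∉ S) :
    ¬ K.Reachable u r := fun h =>
  hu (hK.eq_of_reachable (.inl rfl) (.inr hr) h ▸ hr)

theorem exists_mem_reachable_of_not_reachable (hK : IsRootedForest K (insert u S))
    (hw : ¬ K.Reachable w u) : ∃ s ∈ S, K.Reachable w s := by
  obtain ⟨s, rfl | hs, hws⟩ := hK.exists_reachable w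
  exacts [absurd hws hw, ⟨s, hs, hws⟩]

theorem sup_edge (hK : IsRootedForest K (insert u S)) (hu : u ∉ S) (ha : ¬ K.Reachable a u) :
    IsRootedForest (K ⊔ edge u a) S where
  isAcyclic := hK.isAcyclic.sup_edge_of_not_reachable fun h => ha h.symm
  eq_of_reachable s hs t ht hst := by
    rcases reachable_sup_edge_iff.1 hst with h | ⟨h, -⟩ | ⟨-, h⟩
    · exact hK.eq_of_reachable (.inr hs) (.inr ht) h
    · exact absurd h.symm (hK.not_reachable_of_notMem hs hu)
    · exact absurd h (hK.not_reachable_of_notMem ht hu)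
  exists_reachable w := by
    by_cases hw : K.Reachable w u
    · obtain ⟨s, hs, has⟩ := hK.exists_mem_reachable_of_not_reachable ha
      exact ⟨s, hs, reachable_sup_edge_iff.2 (.inr (.inl ⟨hw, has⟩))⟩
    · obtain ⟨s, hs, hws⟩ := hK.exists_mem_reachable_of_not_reachable hw
      exact ⟨s, hs, hws.mono le_sup_left⟩

theorem deleteEdges (hH : IsRootedForest H S) (hua : H.Adj u a) (hr : r ∈ S)
    (har : (H.deleteEdges {s(u, a)}).Reachable a r) :
    IsRootedForest (H.deleteEdges {s(u, a)}) (insert u S) := by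
  set K := H.deleteEdges {s(u, a)} with hK
  have hKH : K ≤ H := H.deleteEdges_le _
  have hbridge : ¬ K.Reachable u a := isAcyclic_iff_forall_adj_isBridge.1 hH.isAcyclic hua
  have hur : H.Reachable u r := hua.reachable.trans (har.mono hKH)
  have hus : ∀ s ∈ S, ¬ K.Reachable u s := fun s hs h => by
    obtain rfl := hH.eq_of_reachable hr hs (hur.symm.trans (h.mono hKH))
    exact hbridge (h.trans har.symm)
  refine ⟨hH.isAcyclic.anti hKH, ?_, fun w => ?_⟩
  · rintro s (rfl | hs) t (rfl | ht) hst
    exacts [rfl, absurd hst (hus t ht), absurd hst.symm (hus s hs),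
      hH.eq_of_reachable hs ht (hst.mono hKH)]
  · obtain ⟨s, hs, hws⟩ := hH.exists_reachable w
    have hHK : H ≤ K ⊔ edge u a := by
      rw [hK, SimpleGraph.deleteEdges, edge, sdiff_sup_self]
      exact le_sup_left
    rcases reachable_sup_edge_iff.1 (hws.mono hHK) with h | ⟨h, -⟩ | ⟨h, -⟩
    exacts [⟨s, .inr hs, h⟩, ⟨u, .inl rfl, h⟩, ⟨r, .inr hr, h.trans har⟩]

theorem exists_parent (hH : IsRootedForest H S) (hu : u ∉ S) :
    ∃ a, H.Adj u a ∧ IsRootedForest (H.deleteEdges {s(u, a)}) (insert u S) ∧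
      ¬ (H.deleteEdges {s(u, a)}).Reachable a u := by
  obtain ⟨r, hr, hur⟩ := hH.exists_reachable u
  obtain ⟨p, hp⟩ := hur.exists_isPath
  cases p with
  | nil => exact absurd hr hu
  | @cons _ a _ hua q =>
    have hq : s(u, a) ∉ q.edges := fun h =>
      ((Walk.cons_isPath_iff _ _).1 hp).2 (q.fst_mem_support_of_mem_edges h)
    refine ⟨a, hua, hH.deleteEdges hua hr (reachable_deleteEdges_iff_exists_walk.2 ⟨q, hq⟩),
      fun h => isAcyclic_iff_forall_adj_isBridge.1 hH.isAcyclic hua h.symm⟩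

theorem parent_unique (hK : IsRootedForest K (insert u S)) (ha : ¬ K.Reachable a u)
    (hK' : IsRootedForest K' (insert u S)) (ha' : ¬ K'.Reachable a' u) (hu : u ∉ S)
    (h : K ⊔ edge u a = K' ⊔ edge u a') : a = a' := by
  by_contra hne
  have hua' : K.Adj u a' := by
    have : (K ⊔ edge u a).Adj u a' := h ▸ .inr (by
      rw [edge_adj]; exact ⟨.inl ⟨rfl, rfl⟩, fun e => ha' (e ▸ .rfl)⟩)
    exact this.resolve_right (by grind)
  -- Both `K` and `K'` arise from `L` by adding an edge at `u`, namely `u a'` and `u a`.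
  set L := K'.deleteEdges {s(u, a)} with hL
  have hLK : L ≤ K := fun x y hxy => by
    have hxy' : (K ⊔ edge u a).Adj x y := h ▸ .inl ((deleteEdges_le _) hxy)
    refine hxy'.resolve_right fun he => ?_
    simp only [hL, edge, deleteEdges_adj, fromEdgeSet_adj] at hxy he
    exact hxy.2 he.1
  have hK'L : K' ≤ L ⊔ edge u a := by
    rw [hL, SimpleGraph.deleteEdges, edge, sdiff_sup_self]
    exact le_sup_left
  obtain ⟨r, hr, har⟩ := hK'.exists_mem_reachable_of_not_reachable ha'
  rcases reachable_sup_edge_iff.1 (har.mono hK'L) with h | ⟨h, -⟩ | ⟨h, -⟩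
  · exact hK.not_reachable_of_notMem hr hu (hua'.reachable.trans (h.mono hLK))
  · exact ha' (h.mono (deleteEdges_le _))
  · exact ha (hua'.reachable.trans (h.mono hLK)).symm

theorem reachable_right_iff {s t : V} (hH : IsRootedForest H {s, t}) (hst : s ≠ t) :
    H.Reachable w t ↔ ¬ H.Reachable w s := by
  constructor
  · exact fun ht hs => hst (hH.eq_of_reachable (.inl rfl) (.inr rfl) (hs.symm.trans ht))
  · intro hs
    obtain ⟨_, rfl | rfl, h⟩ := hH.exists_reachable w
    exacts [absurd h hs, h]

end IsRootedForest

section WeightSum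

variable {V : Type*} [Fintype V] {R : Type*} [CommRing R]

open Classical in
/-- The generating function `∑_H ∏_{e ∈ H} y e` of the spanning subgraphs `H` of `G` that
satisfy `P`; a subgraph is encoded by its edge set. -/
noncomputable def weightSum (G : SimpleGraph V) [DecidableRel G.Adj] (y : Sym2 V → R)
    (P : SimpleGraph V → Prop) : R :=
  ∑ F ∈ G.edgeFinset.powerset with P (.fromEdgeSet ↑(F : Finset (Sym2 V))), ∏ e ∈ F, y e

/-- The generating function of the forests with root set `S` in which `w` belongs to the tree
rooted at `r`. As a function of `w` it is, up to normalization, the electric potential for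
conductances `y` when `r` is held at voltage one and the other roots are grounded. -/
noncomputable def potential (G : SimpleGraph V) [DecidableRel G.Adj] (y : Sym2 V → R)
    (S : Set V) (r w : V) : R :=
  weightSum G y fun H => IsRootedForest H S ∧ H.Reachable w r

/-- The Laplacian of `G` with conductances `y`. -/
def weightedLaplacian (G : SimpleGraph V) [DecidableRel G.Adj] (y : Sym2 V → R) (f : V → R)
    (u : V) : R :=
  ∑ a ∈ G.neighborFinset u, y s(u, a) * (f u - f a)

variable (G : SimpleGraph V) [DecidableRel G.Adj] (y : Sym2 V → R)

theorem weightSum_congr {P Q : SimpleGraph V → Prop} (h : ∀ H, P H ↔ Q H) :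
    weightSum G y P = weightSum G y Q :=
  congrArg _ (funext fun H => propext (h H))

theorem weightSum_and_add_and_not (P Q : SimpleGraph V → Prop) :
    weightSum G y (fun H => P H ∧ Q H) + weightSum G y (fun H => P H ∧ ¬ Q H) =
      weightSum G y P := by
  classical
  simp only [weightSum, ← filter_filter]
  exact sum_filter_add_sum_filter_not _ _ _

theorem weightSum_eq_sum_fiber {ι : Type*} {P : SimpleGraph V → Prop}
    {s : Finset ι} {f : SimpleGraph V → ι} (h : ∀ H, P H → f H ∈ s) :
    weightSum G y P = ∑ i ∈ s, weightSum G y fun H => P H ∧ f H = i := by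
  classical
  simp only [weightSum, ← filter_filter]
  exact (sum_fiberwise_of_maps_to (fun F hF => h _ (mem_filter.1 hF).2) _).symm

-- Bijection: remove from each forest the first edge on the path from `u` to its root.
theorem weightSum_isRootedForest_and {S : Set V} {u : V} (hu : u ∉ S)
    (Q : SimpleGraph V → Prop) :
    weightSum G y (fun H => IsRootedForest H S ∧ Q H) =
      ∑ a ∈ G.neighborFinset u, y s(u, a) * weightSum G y fun K =>
        IsRootedForest K (insert u S) ∧ ¬ K.Reachable a u ∧ Q (K ⊔ .edge u a) := by
  classical
  simp only [weightSum, mul_sum, sum_sigma']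
  symm
  refine sum_nbij (fun q => insert s(u, q.1) q.2) ?_ ?_ ?_ ?_
  · rintro ⟨a, F⟩ h
    simp only [mem_sigma, SimpleGraph.mem_neighborFinset, mem_filter, mem_powerset,
      coe_insert, fromEdgeSet_insert] at h ⊢
    obtain ⟨hadj, hF, hK, ha, hQ⟩ := h
    exact ⟨insert_subset (by simpa using hadj) hF, hK.sup_edge hu ha, hQ⟩
  · rintro ⟨a, F⟩ h ⟨a', F'⟩ h' he
    simp only [coe_sigma, Set.mem_sigma_iff, mem_coe, mem_filter] at h h' he
    obtain ⟨-, -, hK, ha, -⟩ := h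
    obtain ⟨-, -, hK', ha', -⟩ := h'
    obtain rfl : a = a' := hK.parent_unique ha hK' ha' hu (by
      rw [← fromEdgeSet_insert, ← fromEdgeSet_insert, ← coe_insert, he, coe_insert])
    rw [← erase_insert (notMem_of_not_reachable_fromEdgeSet ha), he,
      erase_insert (notMem_of_not_reachable_fromEdgeSet ha')]
  · intro F h
    simp only [mem_coe, mem_filter, mem_powerset] at h
    obtain ⟨hF, hH, hQ⟩ := h
    obtain ⟨a, hadj, hK, ha⟩ := hH.exists_parent hu
    have hmem : s(u, a) ∈ F := by simpa using hadj.1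
    rw [SimpleGraph.deleteEdges_fromEdgeSet, ← coe_erase] at hK ha
    refine ⟨⟨a, F.erase s(u, a)⟩, ?_, insert_erase hmem⟩
    simp only [coe_sigma, Set.mem_sigma_iff, mem_coe, mem_filter, mem_powerset,
      ← fromEdgeSet_insert, ← coe_insert, insert_erase hmem]
    exact ⟨by simpa using hF hmem, (erase_subset _ _).trans hF, hK, ha, hQ⟩
  · rintro ⟨a, F⟩ h
    simp only [mem_sigma, mem_filter] at h
    exact (prod_insert (notMem_of_not_reachable_fromEdgeSet h.2.2.2.1)).symm

variable {S : Set V} {r t u : V}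

theorem potential_eq_zero (hr : r ∈ S) (hu : u ∈ S) (hur : u ≠ r) : potential G y S r u = 0 := by
  refine sum_eq_zero fun F hF => ?_
  simp only [mem_filter] at hF
  exact absurd (hF.2.1.eq_of_reachable hu hr hF.2.2) hur

theorem potential_eq_sum_neighborFinset (hr : r ∈ S) (hu : u ∉ S) :
    potential G y S r u =
      ∑ a ∈ G.neighborFinset u, y s(u, a) * potential G y (insert u S) r a := by
  rw [potential, weightSum_isRootedForest_and G y hu]
  refine sum_congr rfl fun a _ => congrArg _ (weightSum_congr G y fun K => ?_)
  refine and_congr_right fun hK => ?_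
  have hur := hK.not_reachable_of_notMem hr hu
  simp only [reachable_sup_edge_iff, hur, SimpleGraph.Reachable.rfl, true_and, false_or,
    and_false, or_false, and_iff_right_iff_imp]
  exact fun har hau => hur (hau.symm.trans har)

theorem potential_eq_sum_neighborFinset_add (hr : r ∈ S) (hu : u ∉ S) (w : V) :
    potential G y S r w = ∑ a ∈ G.neighborFinset u, y s(u, a) *
      (weightSum G y (fun K =>
          (IsRootedForest K (insert u S) ∧ K.Reachable w r) ∧ ¬ K.Reachable a u) +
        weightSum G y (fun K =>
          (IsRootedForest K (insert u S) ∧ K.Reachable a r) ∧ K.Reachable w u)) := by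
  rw [potential, weightSum_isRootedForest_and G y hu]
  refine sum_congr rfl fun a _ => congrArg _ ?_
  rw [← weightSum_and_add_and_not G y _ fun K => K.Reachable w u, add_comm]
  refine congrArg₂ _ (weightSum_congr G y fun K => ?_) (weightSum_congr G y fun K => ?_) <;>
  · simp only [reachable_sup_edge_iff]
    have hur (hK : IsRootedForest K (insert u S)) := hK.not_reachable_of_notMem hr hu
    have htrans {b c} (hb : K.Reachable b u) (hc : K.Reachable b c) := hb.symm.trans hc
    grind

-- Expand the left side over pairs of edges at `u`, one to the neighbour `w` and one to the next
-- vertex on the path from `u` to its root; exchanging the two when `w` hangs from `u` gives the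
-- right side.
theorem sum_neighborFinset_mul_potential (hr : r ∈ S) (hu : u ∉ S) :
    ∑ w ∈ G.neighborFinset u, y s(u, w) * potential G y S r w =
      (∑ w ∈ G.neighborFinset u, y s(u, w)) * potential G y S r u := by
  let A (a w : V) := weightSum G y fun K =>
    (IsRootedForest K (insert u S) ∧ K.Reachable w r) ∧ ¬ K.Reachable a u
  let B (a w : V) := weightSum G y fun K =>
    (IsRootedForest K (insert u S) ∧ K.Reachable w r) ∧ K.Reachable a u
  have hAB (a w : V) : A a w + B a w = potential G y (insert u S) r w := by
    rw [add_comm]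
    exact weightSum_and_add_and_not G y _ _
  calc
    _ = ∑ w ∈ G.neighborFinset u, ∑ a ∈ G.neighborFinset u,
          (y s(u, w) * y s(u, a) * A a w + y s(u, w) * y s(u, a) * B w a) := by
      refine sum_congr rfl fun w _ => ?_
      rw [potential_eq_sum_neighborFinset_add G y hr hu, mul_sum]
      exact sum_congr rfl fun a _ => by ring
    _ = ∑ w ∈ G.neighborFinset u, ∑ a ∈ G.neighborFinset u,
          (y s(u, w) * y s(u, a) * A a w + y s(u, a) * y s(u, w) * B a w) := by
      simp only [sum_add_distrib]
      rw [sum_comm (f := fun w a => y s(u, w) * y s(u, a) * B w a)]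
    _ = ∑ w ∈ G.neighborFinset u, ∑ a ∈ G.neighborFinset u,
          y s(u, a) * (y s(u, w) * potential G y (insert u S) r w) :=
      sum_congr rfl fun w _ => sum_congr rfl fun a _ => by rw [← hAB a w]; ring
    _ = _ := by
      rw [potential_eq_sum_neighborFinset G y hr hu, sum_mul_sum, sum_comm]

theorem weightedLaplacian_potential_eq_zero (hr : r ∈ S) (hu : u ∉ S) :
    weightedLaplacian G y (potential G y S r) u = 0 := by
  simp only [weightedLaplacian, mul_sub, sum_sub_distrib, ← sum_mul]
  rw [sum_neighborFinset_mul_potential G y hr hu, sub_self]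

theorem weightedLaplacian_potential_of_mem (hr : r ∈ S) (hu : u ∈ S) (hur : u ≠ r) :
    weightedLaplacian G y (potential G y S r) u = -potential G y (S \ {u}) r u := by
  rw [potential_eq_sum_neighborFinset G y (S := S \ {u}) ⟨hr, hur.symm⟩ (by simp),
    Set.insert_sdiff_singleton, Set.insert_eq_of_mem hu]
  simp [weightedLaplacian, potential_eq_zero G y hr hu hur]

theorem sum_mul_weightedLaplacian_comm (f g : V → R) :
    ∑ u, f u * weightedLaplacian G y g u = ∑ u, g u * weightedLaplacian G y f u := by
  have expand (f g : V → R) : ∑ u, f u * weightedLaplacian G y g u =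
      ∑ u, ∑ a ∈ G.neighborFinset u, y s(u, a) * (f u * g u) -
        ∑ u, ∑ a ∈ G.neighborFinset u, y s(u, a) * (f u * g a) := by
    simp only [weightedLaplacian, mul_sum, ← sum_sub_distrib]
    exact sum_congr rfl fun u _ => sum_congr rfl fun a _ => by ring
  rw [expand, expand, sum_comm' (t' := univ) (s' := fun a => G.neighborFinset a)
    (by simp [G.adj_comm]) (f := fun u a => y s(u, a) * (f u * g a))]
  simp only [Sym2.eq_swap, mul_comm (f _)]

theorem sum_mul_weightedLaplacian_potential [DecidableEq V] {S : Finset V} (hr : r ∈ S)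
    {f : V → R} (hf : f r = 0) :
    ∑ u, f u * weightedLaplacian G y (potential G y S r) u =
      -∑ u ∈ S.erase r, f u * potential G y (S \ {u}) r u := by
  rw [← sum_neg_distrib, ← sum_subset (subset_univ (S.erase r))]
  · refine sum_congr rfl fun u hu => ?_
    rw [mem_erase] at hu
    rw [weightedLaplacian_potential_of_mem G y hr hu.2 hu.1, mul_neg]
  · intro u _ hu
    by_cases hur : u = r
    · rw [hur, hf, zero_mul]
    · rw [weightedLaplacian_potential_eq_zero G y hr (by simpa [hur] using hu), mul_zero]

theorem sum_potential_mul_potential_comm [DecidableEq V] {S T : Finset V} (hrS : r ∈ S)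
    (hrT : r ∈ T) (htS : t ∈ S) (htT : t ∈ T) (hrt : r ≠ t) :
    ∑ u ∈ S.erase r, potential G y T t u * potential G y (S \ {u}) r u =
      ∑ u ∈ T.erase t, potential G y S r u * potential G y (T \ {u}) t u := by
  have h := sum_mul_weightedLaplacian_comm G y (potential G y T t) (potential G y S r)
  rwa [sum_mul_weightedLaplacian_potential G y hrS (potential_eq_zero G y htT hrT hrt),
    sum_mul_weightedLaplacian_potential G y htT (potential_eq_zero G y hrS htS hrt.symm),
    neg_inj] at h

end WeightSum

section ForestPoly

variable {V : Type*} [Fintype V] [DecidableEq V] {R : Type*} [CommRing R]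
  (G : SimpleGraph V) [DecidableRel G.Adj] {m : ℕ}

-- `ρ` chooses a representative in each part of `p`; the representatives serve as roots.
theorem isCompatibleForest_some_iff {v : Fin m → V} (hv : Function.Injective v) {p : Fin m → ℕ}
    {ρ : Fin m → Fin m} (hp : ∀ i, p (ρ i) = p i) (hρ : ∀ i j, p i = p j → ρ i = ρ j)
    {F : Finset (Sym2 V)} (hF : F ⊆ G.edgeFinset) :
    IsCompatibleForest G v (fun i => some (p i)) F ↔
      IsRootedForest (.fromEdgeSet (F : Set (Sym2 V))) (Set.range (v ∘ ρ)) ∧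
        ∀ i, (SimpleGraph.fromEdgeSet (F : Set (Sym2 V))).Reachable (v i) (v (ρ i)) := by
  have hF' : (F : Set (Sym2 V)) ⊆ G.edgeSet := by simpa using coe_subset.2 hF
  simp only [IsCompatibleForest, hF', true_and, ne_eq, reduceCtorEq, not_false_eq_true,
    forall_const, Option.some.injEq]
  constructor
  · rintro ⟨hacyclic, hreach, hroot⟩
    have hρ_reach i := (hreach i (ρ i)).2 (hp i).symm
    refine ⟨⟨hacyclic, ?_, fun w => ?_⟩, hρ_reach⟩
    · rintro _ ⟨i, rfl⟩ _ ⟨j, rfl⟩ hij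
      have hpij : p i = p j := by rw [← hp i, ← hp j, (hreach _ _).1 hij]
      exact congrArg v (hρ i j hpij)
    · obtain ⟨i, hi⟩ := hroot w
      exact ⟨_, ⟨i, rfl⟩, hi.trans (hρ_reach i)⟩
  · rintro ⟨hrooted, hρ_reach⟩
    refine ⟨hrooted.isAcyclic, fun i j => ⟨fun hij => ?_, fun hij => ?_⟩, fun w => ?_⟩
    · have hρij : v (ρ i) = v (ρ j) := hrooted.eq_of_reachable ⟨i, rfl⟩ ⟨j, rfl⟩
        ((hρ_reach i).symm.trans (hij.trans (hρ_reach j)))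
      rw [← hp i, hv hρij, hp j]
    · exact (hρ_reach i).trans (hρ i j hij ▸ (hρ_reach j).symm)
    · obtain ⟨_, ⟨i, rfl⟩, hi⟩ := hrooted.exists_reachable w
      exact ⟨ρ i, hi⟩

theorem forestPoly_congr (x : Sym2 V → R) (v : Fin m → V) {p q : Fin m → Option ℕ}
    (hnone : ∀ i, p i = none ↔ q i = none) (heq : ∀ i j, p i = p j ↔ q i = q j) :
    forestPoly G x v p = forestPoly G x v q := by
  have hcompat : IsCompatibleForest G v p = IsCompatibleForest G v q := by
    funext F
    simp only [IsCompatibleForest, ne_eq, hnone, heq]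
  rw [forestPoly, hcompat, forestPoly]

theorem map_forestPoly {S : Type*} [CommRing S] (f : R →+* S) (x : Sym2 V → R) (v : Fin m → V)
    (p : Fin m → Option ℕ) : f (forestPoly G x v p) = forestPoly G (f ∘ x) v p := by
  simp only [forestPoly, map_sum, apply_ite f, map_prod, map_zero, Function.comp_apply]

theorem forestPoly_eq_aeval (x : Sym2 V → R) (v : Fin m → V) (p : Fin m → Option ℕ) :
    forestPoly G x v p =
      MvPolynomial.aeval x (forestPoly G (MvPolynomial.X (R := ℤ)) v p) := by
  rw [← AlgHom.coe_toRingHom, map_forestPoly]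
  congr
  ext e
  simp

theorem forestPoly_units_eq (x : Sym2 V → Rˣ) {v : Fin m → V} (hv : Function.Injective v)
    {p : Fin m → ℕ} {ρ : Fin m → Fin m} (hp : ∀ i, p (ρ i) = p i)
    (hρ : ∀ i j, p i = p j → ρ i = ρ j) :
    forestPoly G (fun e => (x e : R)) v (fun i => some (p i)) =
      (∏ e ∈ G.edgeFinset, (x e : R)) * weightSum G (fun e => ↑(x e)⁻¹) fun H =>
        IsRootedForest H (Set.range (v ∘ ρ)) ∧ ∀ i, H.Reachable (v i) (v (ρ i)) := by
  classical
  rw [weightSum, mul_sum, sum_filter]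
  refine sum_congr rfl fun F hF => ?_
  rw [mem_powerset] at hF
  have hprod : (∏ e ∈ G.edgeFinset, (x e : R)) * ∏ e ∈ F, (↑(x e)⁻¹ : R) =
      ∏ e ∈ G.edgeFinset \ F, (x e : R) := by
    rw [← prod_sdiff hF, mul_assoc, ← prod_mul_distrib,
      prod_congr rfl (fun e _ => (x e).mul_inv), prod_const_one, mul_one]
  simp only [isCompatibleForest_some_iff G hv hp hρ hF, hprod]

section Units

variable (x : Sym2 V → Rˣ) {v : Fin m → V} {r t k : Fin m}

theorem forestPoly_units_const (hv : Function.Injective v) :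
    forestPoly G (fun e => (x e : R)) v (fun _ => some 0) =
      (∏ e ∈ G.edgeFinset, (x e : R)) *
        potential G (fun e => ↑(x e)⁻¹) {v t} (v t) (v r) := by
  rw [forestPoly_units_eq G x hv (p := fun _ => 0) (ρ := fun _ => t) (by simp) (by simp)]
  refine congrArg _ (weightSum_congr _ _ fun H => ?_)
  have := Nonempty.intro t
  have hrange : Set.range (v ∘ fun _ : Fin m => t) = {v t} := Set.range_const
  rw [hrange]
  refine and_congr_right fun hH => ⟨fun h => h r, fun _ i => ?_⟩
  obtain ⟨_, rfl, hi⟩ := hH.exists_reachable (v i)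
  exact hi

theorem forestPoly_units_id (hv : Function.Injective v) :
    forestPoly G (fun e => (x e : R)) v (fun i => some i) =
      (∏ e ∈ G.edgeFinset, (x e : R)) *
        potential G (fun e => ↑(x e)⁻¹) (Set.range v) (v r) (v r) := by
  rw [forestPoly_units_eq G x hv (ρ := id) (by simp) (by simp [Fin.ext_iff])]
  exact congrArg _ (weightSum_congr _ _ fun H => by simp)

theorem forestPoly_units_update (hv : Function.Injective v) (hkr : k ≠ r) :
    forestPoly G (fun e => (x e : R)) v (fun i => some (Function.update id k r i : Fin m)) =
      (∏ e ∈ G.edgeFinset, (x e : R)) *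
        potential G (fun e => ↑(x e)⁻¹) (Set.range v \ {v k}) (v r) (v k) := by
  rw [forestPoly_units_eq G x hv (ρ := Function.update id k r)
    (p := fun i => (Function.update id k r i : Fin m)) (by grind) (by simp [Fin.ext_iff])]
  have hrange : Set.range (v ∘ Function.update id k r) = Set.range v \ {v k} := by
    rw [← Set.image_singleton, ← Set.image_univ (f := v), ← Set.image_sdiff hv, Set.range_comp]
    congr 1
    ext i
    simp only [Set.mem_range, Set.mem_sdiff, Set.mem_univ, Set.mem_singleton_iff, true_and]
    exact ⟨by rintro ⟨j, rfl⟩; grind, fun hi => ⟨i, by grind⟩⟩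
  rw [hrange]
  refine congrArg _ (weightSum_congr _ _ fun H => and_congr_right fun _ =>
    ⟨fun h => by simpa using h k, fun h i => ?_⟩)
  obtain rfl | hik := eq_or_ne i k
  · simpa using h
  · simp [hik]

theorem sum_forestPoly_units (hv : Function.Injective v) (hrt : r ≠ t) :
    ∑ c : Fin m → Fin 2 with c r = 0 ∧ c k = 1 ∧ c t = 1,
        forestPoly G (fun e => (x e : R)) v (fun i => some (c i)) =
      (∏ e ∈ G.edgeFinset, (x e : R)) *
        potential G (fun e => ↑(x e)⁻¹) {v r, v t} (v t) (v k) := by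
  classical
  let color (H : SimpleGraph V) (i : Fin m) : Fin 2 := if H.Reachable (v i) (v r) then 0 else 1
  have hcolor {H : SimpleGraph V} (hH : IsRootedForest H {v r, v t}) (c : Fin m → Fin 2) :
      color H = c ↔ ∀ i, H.Reachable (v i) (v (![r, t] (c i))) := by
    refine funext_iff.trans (forall_congr' fun i => ?_)
    generalize c i = b
    fin_cases b <;> simp [color, hH.reachable_right_iff (hv.ne hrt)]
  rw [potential, weightSum_eq_sum_fiber G _ (f := color)
    (s := {c : Fin m → Fin 2 | c r = 0 ∧ c k = 1 ∧ c t = 1}) ?_, mul_sum]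
  · refine sum_congr rfl fun c hc => ?_
    obtain ⟨hr, hk, ht⟩ := (mem_filter.1 hc).2
    have hrep (b : Fin 2) : c (![r, t] b) = b := by fin_cases b <;> simp [hr, ht]
    have hrange : Set.range (v ∘ fun i => ![r, t] (c i)) = {v r, v t} := by
      have hc_surj : Function.Surjective c := fun b => ⟨_, hrep b⟩
      calc
        _ = Set.range (v ∘ ![r, t]) := hc_surj.range_comp (v ∘ ![r, t])
        _ = _ := by simp [Set.range_comp, Set.image_pair, Set.pair_comm]
    rw [forestPoly_units_eq G x hv (p := fun i => c i) (ρ := fun i => ![r, t] (c i))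
      (fun i => by rw [hrep]) (fun i j h => by rw [Fin.ext h]), hrange]
    refine congrArg _ (weightSum_congr _ _ fun H => ?_)
    rw [and_assoc]
    refine and_congr_right fun hH => ?_
    rw [hcolor hH, iff_and_self]
    exact fun h => by simpa [hk] using h k
  · rintro H ⟨hH, hkt⟩
    have hkr := (hH.reachable_right_iff (hv.ne hrt)).1 hkt
    have htr := (hH.reachable_right_iff (hv.ne hrt)).1 (.refl (v t))
    simp [color, hkr, htr]

theorem forestPoly_units_column_expansion (hv : Function.Injective v) (hrt : r ≠ t) :
    forestPoly G (fun e => (x e : R)) v (fun _ => some 0) *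
        forestPoly G (fun e => (x e : R)) v (fun i => some i) =
      ∑ k ∈ univ.erase r,
        forestPoly G (fun e => (x e : R)) v (fun i => some (Function.update id k r i : Fin m)) *
          ∑ c : Fin m → Fin 2 with c r = 0 ∧ c k = 1 ∧ c t = 1,
            forestPoly G (fun e => (x e : R)) v (fun i => some (c i)) := by
  have hvrt : v r ≠ v t := hv.ne hrt
  have h := sum_potential_mul_potential_comm G (fun e => ((x e)⁻¹ : Rˣ).val)
    (S := univ.image v) (T := {v r, v t}) (r := v r) (t := v t) (by simp) (by simp) (by simp)
    (by simp) hvrt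
  rw [← image_erase hv, sum_image hv.injOn] at h
  have hpair : ({v r, v t} : Finset V).erase (v t) = {v r} := by grind
  have hpair' : ({v r, v t} \ {v r} : Set V) = {v t} := by simp [hvrt]
  rw [hpair, sum_singleton] at h
  push_cast at h
  simp only [Set.image_univ, hpair'] at h
  rw [forestPoly_units_const G x hv (r := r) (t := t), forestPoly_units_id G x hv (r := r),
    mul_mul_mul_comm, mul_comm (potential ..), ← h, mul_sum]
  refine sum_congr rfl fun k hk => ?_
  rw [forestPoly_units_update G x hv (ne_of_mem_erase hk), sum_forestPoly_units G x hv hrt]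
  ring

end Units

-- The first factor on the right merges `k` into the part of `r`; `c` runs over the partitions into
-- two parts that separate `r` from `k` and `t`.
theorem forestPoly_column_expansion (x : Sym2 V → R) {v : Fin m → V}
    (hv : Function.Injective v) {r t : Fin m} (hrt : r ≠ t) :
    forestPoly G x v (fun _ => some 0) * forestPoly G x v (fun i => some i) =
      ∑ k ∈ univ.erase r, forestPoly G x v (fun i => some (Function.update id k r i : Fin m)) *
        ∑ c : Fin m → Fin 2 with c r = 0 ∧ c k = 1 ∧ c t = 1,
          forestPoly G x v (fun i => some (c i)) := by
  simp only [forestPoly_eq_aeval G x, ← map_mul, ← map_sum]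
  congr 1
  let K := FractionRing (MvPolynomial (Sym2 V) ℤ)
  apply IsFractionRing.injective (MvPolynomial (Sym2 V) ℤ) K
  have hX (e : Sym2 V) : algebraMap (MvPolynomial (Sym2 V) ℤ) K (.X e) ≠ 0 := by
    simp
  simp only [map_mul, map_sum, map_forestPoly]
  exact forestPoly_units_column_expansion G (fun e => Units.mk0 _ (hX e)) hv hrt

end ForestPoly

/-- **The identity `𝓛_{4,4}(2)`** for `m = 4` marked vertices on any graph:
`Φ_{(1,1,1,1)} Φ_{(1,2,3,4)} = A₅(B₁+B₃+B₅+B₇) + A₁(B₃+B₇) + A₃(B₃+B₅)` with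
`A₁ = Φ_{(1,1,2,3)}`, `A₃ = Φ_{(1,2,2,3)}`, `A₅ = Φ_{(1,2,3,2)}`,
`B₁ = Φ_{(1,1,1,2)}`, `B₃ = Φ_{(1,2,1,1)}`, `B₅ = Φ_{(1,1,2,2)}`, `B₇ = Φ_{(1,2,2,1)}`. -/
theorem L44_2_identity {V : Type*} [Fintype V] [DecidableEq V] {R : Type*}
    [CommRing R] (G : SimpleGraph V) [DecidableRel G.Adj] (x : Sym2 V → R)
    (v : Fin 4 → V) (hv : Function.Injective v) :
    let Φ : (Fin 4 → Option ℕ) → R := fun p => forestPoly G x v p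
    let A1 := Φ ![some 1, some 1, some 2, some 3]
    let A3 := Φ ![some 1, some 2, some 2, some 3]
    let A5 := Φ ![some 1, some 2, some 3, some 2]
    let B1 := Φ ![some 1, some 1, some 1, some 2]
    let B3 := Φ ![some 1, some 2, some 1, some 1]
    let B5 := Φ ![some 1, some 1, some 2, some 2]
    let B7 := Φ ![some 1, some 2, some 2, some 1]
    Φ ![some 1, some 1, some 1, some 1] * Φ ![some 1, some 2, some 3, some 4] =
      A5 * (B1 + B3 + B5 + B7) + A1 * (B3 + B7) + A3 * (B3 + B5) := by
  intro Φ A1 A3 A5 B1 B3 B5 B7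
  have hmerge : (univ : Finset (Fin 4)).erase 1 = {0, 2, 3} := by decide
  have hcol₀ : ({c : Fin 4 → Fin 2 | c 1 = 0 ∧ c 0 = 1 ∧ c 3 = 1} : Finset _) =
    {![1, 0, 1, 1], ![1, 0, 0, 1]} := by decide
  have hcol₂ : ({c : Fin 4 → Fin 2 | c 1 = 0 ∧ c 2 = 1 ∧ c 3 = 1} : Finset _) =
    {![1, 0, 1, 1], ![0, 0, 1, 1]} := by decide
  have hcol₃ : ({c : Fin 4 → Fin 2 | c 1 = 0 ∧ c 3 = 1 ∧ c 3 = 1} : Finset _) =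
    {![0, 0, 0, 1], ![1, 0, 1, 1], ![0, 0, 1, 1], ![1, 0, 0, 1]} := by decide
  have hΦ {p : Fin 4 → Option ℕ} (q : Fin 4 → Option ℕ)
      (h : (∀ i, p i = none ↔ q i = none) ∧ ∀ i j, p i = p j ↔ q i = q j) :
      forestPoly G x v p = Φ q := forestPoly_congr G x v h.1 h.2
  have h := forestPoly_column_expansion G x hv (r := 1) (t := 3) (by decide)
  rw [hmerge, sum_insert (by decide), sum_pair (by decide), hcol₀, hcol₂, hcol₃,
    sum_pair (by decide), sum_pair (by decide), sum_insert (by decide), sum_insert (by decide),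
    sum_pair (by decide)] at h
  rw [hΦ ![some 1, some 1, some 1, some 1] (by decide),
    hΦ ![some 1, some 2, some 3, some 4] (by decide),
    hΦ ![some 1, some 1, some 2, some 3] (by decide),
    hΦ ![some 1, some 2, some 1, some 1] (by decide),
    hΦ ![some 1, some 2, some 2, some 1] (by decide),
    hΦ ![some 1, some 2, some 2, some 3] (by decide),
    hΦ ![some 1, some 1, some 2, some 2] (by decide),
    hΦ ![some 1, some 2, some 3, some 2] (by decide),
    hΦ ![some 1, some 1, some 1, some 2] (by decide)] at h
  linear_combination h
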